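/- The real number [ √(124√5 − 265)·log(1 + √5/2 − √(4√5+5)/2) − √(124√5 + 265)·arccos(√5/2 − 1) ] / (55√11) + 1/11 is transcendental (over ℚ). -/

import Mathlib

open Real

/-!
If `γ + β₁ * ℓ₁ + β₂ * ℓ₂` is algebraic for algebraic `γ`, `β₁`, `β₂` with `β₁`, `β₂` not both zero
and logarithms `ℓ₁`, `ℓ₂` of algebraic numbers, then one of the logarithms is `b₀ + b₁ * ℓ` with `ℓ`
the other one and `b₀`, `b₁` algebraic. Following Baker, consider
`F z₀ z₁ = ∑ p (i, j₁, j₂) * z₀ ^ i * exp (j₂ * b₀ * z₀) * exp ((j₁ + j₂ * b₁) * z₁)`. Its partial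
derivatives at the points `(k, ℓ * k)`, `k ∈ ℕ`, are algebraic numbers, and Siegel's lemma provides
small coefficients `p`, not all zero, for which many of them vanish at few points. The Schwarz lemma
along the line `(z, ℓ * z)` makes the derivatives of lower order tiny at many more points, where
they then vanish because a nonzero algebraic number of bounded size and denominator is not tiny.
Repeating this trades orders of derivation for points, until `F` itself vanishes at more points
`(k, ℓ * k)` than it has coefficients. As `F k (ℓ * k)` is an exponential polynomial in `k` with
bases `exp ℓ₁ ^ j₁ * exp ℓ₂ ^ j₂`, this is absurd when `exp ℓ₁` and `exp ℓ₂` are multiplicatively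
independent.

In the case at hand `exp ℓ₁` is a real number in `(0, 1)` and `exp ℓ₂` is of the form `exp (i * θ)`
with `cos θ = √5 / 2 - 1`. The conjugate `-√5 / 2 - 1` of `cos θ` has absolute value greater
than `1`, so the Chebyshev polynomials exclude that `exp (i * θ)` is a root of unity.
-/

section EntireFunctions

open Complex

theorem exists_entire_eq_pow_sub_mul {f : ℂ → ℂ} (hf : Differentiable ℂ f) {a : ℂ} {n : ℕ}
    (hn : n ≤ analyticOrderAt f a) :
    ∃ g : ℂ → ℂ, Differentiable ℂ g ∧ ∀ z, f z = (z - a) ^ n * g z := by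
  induction n generalizing f with
  | zero => exact ⟨f, hf, by simp⟩
  | succ n ih =>
    have hfa : f a = 0 := apply_eq_zero_of_analyticOrderAt_ne_zero <| by
      rintro h
      simp [h] at hn
    have hd : Differentiable ℂ (dslope f a) := by
      rw [← differentiableOn_univ] at hf ⊢
      exact (differentiableOn_dslope Filter.univ_mem).2 hf
    have hfd : f = (· - a) * dslope f a := by
      ext z
      simpa [hfa, eq_comm] using sub_smul_dslope f a z
    have hdn : n ≤ analyticOrderAt (dslope f a) a := by
      rw [hfd, analyticOrderAt_mul (by fun_prop) (hd.analyticAt a),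
        analyticOrderAt_id_sub_const_self, Nat.cast_succ, add_comm] at hn
      exact (ENat.add_le_add_iff_left ENat.one_ne_top).1 hn
    obtain ⟨g, hg, hdg⟩ := ih hd hdn
    refine ⟨g, hg, fun z => ?_⟩
    rw [congrFun hfd z, Pi.mul_apply, hdg]
    ring

theorem exists_entire_eq_prod_pow_sub_mul {f : ℂ → ℂ} (hf : Differentiable ℂ f) {s : Finset ℂ}
    {n : ℕ} (hn : ∀ a ∈ s, n ≤ analyticOrderAt f a) :
    ∃ g : ℂ → ℂ, Differentiable ℂ g ∧ ∀ z, f z = (∏ a ∈ s, (z - a) ^ n) * g z := by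
  induction s using Finset.induction_on with
  | empty => exact ⟨f, hf, by simp⟩
  | insert b s hb ih =>
    obtain ⟨g, hg, hfg⟩ := ih fun a ha => hn a (Finset.mem_insert_of_mem ha)
    have hprod : Differentiable ℂ fun z : ℂ => ∏ a ∈ s, (z - a) ^ n := by fun_prop
    have hprod_b : analyticOrderAt (fun z : ℂ => ∏ a ∈ s, (z - a) ^ n) b = 0 := by
      rw [(hprod.analyticAt b).analyticOrderAt_eq_zero, Finset.prod_ne_zero_iff]
      exact fun a ha => pow_ne_zero _ (sub_ne_zero.2 (ne_of_mem_of_not_mem ha hb).symm)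
    have hgb : n ≤ analyticOrderAt g b := by
      have := hn b (Finset.mem_insert_self b s)
      rwa [show f = (fun z => ∏ a ∈ s, (z - a) ^ n) * g from funext hfg,
        analyticOrderAt_mul (hprod.analyticAt b) (hg.analyticAt b), hprod_b, zero_add] at this
    obtain ⟨h, hh, hgh⟩ := exists_entire_eq_pow_sub_mul hg hgb
    refine ⟨h, hh, fun z => ?_⟩
    rw [hfg, hgh, Finset.prod_insert hb]
    ring

theorem norm_le_of_le_analyticOrderAt {f : ℂ → ℂ} (hf : Differentiable ℂ f) {s : Finset ℂ}
    {n : ℕ} (hn : ∀ a ∈ s, n ≤ analyticOrderAt f a) {r R B : ℝ} (hr : 0 ≤ r) (hrR : r < R)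
    (hs : ∀ a ∈ s, ‖a‖ ≤ r) (hB : ∀ z, ‖z‖ ≤ R → ‖f z‖ ≤ B) {z : ℂ} (hz : ‖z‖ ≤ r) :
    ‖f z‖ ≤ (2 * r / (R - r)) ^ (n * s.card) * B := by
  obtain ⟨g, hg, hfg⟩ := exists_entire_eq_prod_pow_sub_mul hf hn
  have hRr : 0 < R - r := sub_pos.2 hrR
  have norm_prod_eq (w : ℂ) : ‖∏ a ∈ s, (w - a) ^ n‖ = (∏ a ∈ s, ‖w - a‖) ^ n := by
    simp only [norm_prod, norm_pow, Finset.prod_pow]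
  have hgz : ‖g z‖ ≤ B / (R - r) ^ (n * s.card) := by
    refine norm_le_of_forall_mem_frontier_norm_le (U := Metric.ball 0 R)
      Metric.isBounded_ball hg.diffContOnCl (fun w hw => ?_)
      (subset_closure (by simpa using hz.trans_lt hrR))
    rw [frontier_ball _ (by linarith), mem_sphere_zero_iff_norm] at hw
    have hprod : (R - r) ^ s.card ≤ ∏ a ∈ s, ‖w - a‖ := by
      rw [← Finset.prod_const]
      refine Finset.prod_le_prod (fun _ _ => hRr.le) fun a ha => ?_
      linarith [norm_sub_norm_le w a, hs a ha]
    rw [le_div_iff₀' (by positivity)]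
    calc (R - r) ^ (n * s.card) * ‖g w‖
        ≤ (∏ a ∈ s, ‖w - a‖) ^ n * ‖g w‖ := by rw [pow_mul']; gcongr
      _ = ‖f w‖ := by rw [hfg, norm_mul, norm_prod_eq]
      _ ≤ B := hB w hw.le
  have hprod : ∏ a ∈ s, ‖z - a‖ ≤ (2 * r) ^ s.card := by
    rw [← Finset.prod_const]
    refine Finset.prod_le_prod (fun _ _ => norm_nonneg _) fun a ha => ?_
    linarith [norm_sub_le z a, hs a ha]
  calc ‖f z‖ = (∏ a ∈ s, ‖z - a‖) ^ n * ‖g z‖ := by rw [hfg, norm_mul, norm_prod_eq]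
    _ ≤ ((2 * r) ^ s.card) ^ n * (B / (R - r) ^ (n * s.card)) := by gcongr
    _ = (2 * r / (R - r)) ^ (n * s.card) * B := by rw [← pow_mul', div_pow]; ring

end EntireFunctions

section ExponentialPolynomials

open Polynomial

variable {F ι : Type*} [Field F]

theorem degree_taylor_sub_lt {P : F[X]} (hP : P ≠ 0) (r : F) :
    (taylor r P - P).degree < P.degree := by
  simpa using degree_sub_lt_left (p := taylor r P) (q := P) (by simp)
    (by rwa [Ne, taylor_eq_zero]) (by simp)

theorem eq_zero_of_C_mul_taylor_eq {a b r : F} (hab : a ≠ b) {P : F[X]}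
    (h : C a * taylor r P = C b * P) : P = 0 := by
  have hlead := congrArg (coeff · P.natDegree) h
  simp only [coeff_C_mul, coeff_taylor_natDegree, coeff_natDegree] at hlead
  by_contra hP
  exact hab (mul_right_cancel₀ (leadingCoeff_ne_zero.2 hP) hlead)

theorem eq_C_of_taylor_one_eq_self [CharZero F] {P : F[X]} (h : taylor 1 P = P) :
    P = C (P.eval 0) := by
  have heval (k : ℕ) : P.eval (k : F) = P.eval 0 := by
    induction k with
    | zero => simp
    | succ k ih =>
      rw [← ih, Nat.cast_succ, ← taylor_eval, h]
  refine eq_of_infinite_eval_eq _ _ (Set.infinite_of_injective_forall_mem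
    (Nat.cast_injective (R := F)) fun k => ?_)
  simpa using heval k

theorem degree_C_mul_taylor_sub_lt {P : F[X]} {d : ℕ} (hP : P.degree < d) (a b r : F) :
    (C a * taylor r P - C b * P).degree < d := by
  simp only [← smul_eq_C_mul]
  refine (degree_sub_le _ _).trans_lt (max_lt ?_ ?_)
  · exact (degree_smul_le _ _).trans_lt (by rwa [degree_taylor])
  · exact (degree_smul_le _ _).trans_lt hP

theorem degree_C_mul_taylor_sub_lt_pred {P : F[X]} {d : ℕ} (hP : P.degree < d) (a r : F) :
    (C a * taylor r P - C a * P).degree < (d - 1 : ℕ) := by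
  rcases eq_or_ne P 0 with rfl | hP0
  · simp
  rw [← mul_sub, ← smul_eq_C_mul]
  refine ((degree_smul_le _ _).trans_lt (degree_taylor_sub_lt hP0 r)).trans_le ?_
  rw [degree_eq_natDegree hP0, Nat.cast_lt] at *
  exact_mod_cast Nat.le_sub_one_of_lt hP

theorem sum_eval_C_mul_taylor_sub_mul_pow (s : Finset ι) (w : ι → F) (P : ι → F[X]) (a : F)
    (k : ℕ) :
    ∑ i ∈ s, (C (w i) * taylor 1 (P i) - C a * P i).eval (k : F) * w i ^ k =
      ∑ i ∈ s, (P i).eval ((k + 1 : ℕ) : F) * w i ^ (k + 1) -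
        a * ∑ i ∈ s, (P i).eval (k : F) * w i ^ k := by
  rw [Finset.mul_sum, ← Finset.sum_sub_distrib]
  refine Finset.sum_congr rfl fun i _ => ?_
  simp only [eval_sub, eval_mul, eval_C, taylor_eval, Nat.cast_succ]
  ring

theorem eq_zero_of_sum_eval_mul_pow_eq_zero [CharZero F] {s : Finset ι} {w : ι → F}
    (hw : Set.InjOn w s) (hw0 : ∀ i ∈ s, w i ≠ 0) {d : ι → ℕ} {P : ι → F[X]}
    (hP : ∀ i ∈ s, (P i).degree < d i)
    (h : ∀ k < ∑ i ∈ s, d i, ∑ i ∈ s, (P i).eval (k : F) * w i ^ k = 0) :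
    ∀ i ∈ s, P i = 0 := by
  classical
  induction hM : ∑ i ∈ s, d i generalizing d P with
  | zero =>
    intro i hi
    have hdi := hP i hi
    rw [Finset.sum_eq_zero_iff.1 hM i hi, Nat.cast_zero] at hdi
    exact degree_eq_bot.1 (Nat.WithBot.lt_zero_iff.1 hdi)
  | succ M ih =>
    obtain ⟨i₀, hi₀, hd⟩ : ∃ i ∈ s, d i ≠ 0 := by
      by_contra! hd
      simp [Finset.sum_eq_zero hd] at hM
    have hsum : ∑ i ∈ s, Function.update d i₀ (d i₀ - 1) i = M := by
      rw [Finset.sum_update_of_mem hi₀, Finset.sdiff_singleton_eq_erase]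
      have := Finset.add_sum_erase s d hi₀
      omega
    -- The operator `E - w i₀`, where `E` is the shift `k ↦ k + 1`, lowers the degree of `P i₀`.
    have hshift : ∀ i ∈ s, C (w i) * taylor 1 (P i) - C (w i₀) * P i = 0 := by
      refine ih (d := Function.update d i₀ (d i₀ - 1)) (fun i hi => ?_) (fun k hk => ?_) hsum
      · rcases eq_or_ne i i₀ with rfl | hne
        · simpa using degree_C_mul_taylor_sub_lt_pred (hP i hi) (w i) 1
        · simpa [hne] using degree_C_mul_taylor_sub_lt (hP i hi) (w i) (w i₀) 1
      · rw [sum_eval_C_mul_taylor_sub_mul_pow, h (k + 1) (by omega), h k (by omega), mul_zero,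
          sub_zero]
    have hP_ne : ∀ i ∈ s, i ≠ i₀ → P i = 0 := fun i hi hne =>
      eq_zero_of_C_mul_taylor_eq (hw.ne hi hi₀ hne) (sub_eq_zero.1 (hshift i hi))
    have hP_i₀ : P i₀ = C ((P i₀).eval 0) := eq_C_of_taylor_one_eq_self <|
      mul_left_cancel₀ (C_ne_zero.2 (hw0 i₀ hi₀)) (sub_eq_zero.1 (hshift i₀ hi₀))
    have h_i₀ : (P i₀).eval 0 = 0 := by
      have h0 := h 0 (by omega)
      rw [Finset.sum_eq_single_of_mem i₀ hi₀ fun i hi hne => by simp [hP_ne i hi hne]] at h0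
      simpa using h0
    intro i hi
    rcases eq_or_ne i i₀ with rfl | hne
    · rw [hP_i₀, h_i₀, C_0]
    · exact hP_ne i hi hne

end ExponentialPolynomials

section MonomialExpDeriv

/-- The polynomial `exp (-c z) * (d/dz) ^ m (z ^ l * exp (c z))` in `z` and `c`. It is defined by
recursion over any commutative ring in order to be available in `ℂ` and in a number field. -/
def monomialExpDeriv {A : Type*} [CommRing A] (z c : A) : ℕ → ℕ → A
  | 0, l => z ^ l
  | m + 1, l => l * monomialExpDeriv z c m (l - 1) + c * monomialExpDeriv z c m l

theorem map_monomialExpDeriv {A B : Type*} [CommRing A] [CommRing B] (f : A →+* B) (z c : A)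
    (m l : ℕ) : f (monomialExpDeriv z c m l) = monomialExpDeriv (f z) (f c) m l := by
  induction m generalizing l with
  | zero => simp [monomialExpDeriv]
  | succ m ih => simp [monomialExpDeriv, ih]

theorem hasDerivAt_monomialExpDeriv (c : ℂ) (m l : ℕ) (z : ℂ) :
    HasDerivAt (fun z => monomialExpDeriv z c m l) (l * monomialExpDeriv z c m (l - 1)) z := by
  induction m generalizing l with
  | zero => simpa [monomialExpDeriv] using hasDerivAt_pow l z
  | succ m ih =>
    refine (((ih (l - 1)).const_mul (l : ℂ)).add ((ih l).const_mul c)).congr_deriv ?_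
    simp only [monomialExpDeriv]
    ring

theorem norm_monomialExpDeriv_le {z c : ℂ} {R Y : ℝ} (hR : 1 ≤ R) (hz : ‖z‖ ≤ R) (m : ℕ) {l : ℕ}
    (hY : l + ‖c‖ ≤ Y) : ‖monomialExpDeriv z c m l‖ ≤ Y ^ m * R ^ l := by
  induction m generalizing l with
  | zero =>
    simp only [monomialExpDeriv, norm_pow, pow_zero, one_mul]
    gcongr
  | succ m ih =>
    have hY0 : 0 ≤ Y := le_trans (by positivity) hY
    have hpred : ‖monomialExpDeriv z c m (l - 1)‖ ≤ Y ^ m * R ^ l := by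
      refine (ih (le_trans ?_ hY)).trans ?_
      · gcongr
        exact l.sub_le 1
      · gcongr
        exact l.sub_le 1
    calc ‖monomialExpDeriv z c (m + 1) l‖
        ≤ l * ‖monomialExpDeriv z c m (l - 1)‖ + ‖c‖ * ‖monomialExpDeriv z c m l‖ := by
          refine (norm_add_le _ _).trans_eq ?_
          rw [norm_mul, norm_mul, Complex.norm_natCast]
      _ ≤ l * (Y ^ m * R ^ l) + ‖c‖ * (Y ^ m * R ^ l) := by gcongr; exact ih hY
      _ = (l + ‖c‖) * (Y ^ m * R ^ l) := by ring
      _ ≤ Y * (Y ^ m * R ^ l) := by gcongr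
      _ = Y ^ (m + 1) * R ^ l := by ring

theorem isIntegral_pow_mul_monomialExpDeriv {A : Type*} [CommRing A] {D z c : A}
    (hD : IsIntegral ℤ D) (hz : IsIntegral ℤ z) (hc : IsIntegral ℤ (D * c)) (m l : ℕ) :
    IsIntegral ℤ (D ^ m * monomialExpDeriv z c m l) := by
  induction m generalizing l with
  | zero => simpa [monomialExpDeriv] using hz.pow l
  | succ m ih =>
    have hrec : D ^ (m + 1) * monomialExpDeriv z c (m + 1) l =
        D * l * (D ^ m * monomialExpDeriv z c m (l - 1)) +
          D * c * (D ^ m * monomialExpDeriv z c m l) := by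
      simp only [monomialExpDeriv]
      ring
    rw [hrec]
    exact ((hD.mul (isIntegral_natCast l)).mul (ih _)).add (hc.mul (ih _))

end MonomialExpDeriv

section NumberField

open NumberField

variable {K : Type*} [Field K] [NumberField K]

theorem house_le_iff {x : K} {r : ℝ} (hr : 0 ≤ r) : house x ≤ r ↔ ∀ σ : K →+* ℂ, ‖σ x‖ ≤ r :=
  pi_norm_le_iff_of_nonneg hr

theorem one_le_norm_mul_house_pow {ξ : K} (hξ : IsIntegral ℤ ξ) (h0 : ξ ≠ 0) (φ : K →+* ℂ) :
    1 ≤ ‖φ ξ‖ * house ξ ^ (Module.finrank ℚ K - 1) := by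
  obtain ⟨N, hN⟩ := IsIntegrallyClosed.isIntegral_iff.1 (Algebra.isIntegral_norm ℚ hξ)
  have hN0 : N ≠ 0 := by
    rintro rfl
    exact Algebra.norm_ne_zero_iff.2 h0 (by rw [← hN, map_zero])
  have hnorm : 1 ≤ ‖Algebra.norm ℚ ξ‖ := by
    rw [← hN, eq_intCast, Int.norm_cast_rat, Int.norm_eq_abs]
    exact_mod_cast Int.one_le_abs hN0
  exact hnorm.trans (norm_norm_le_norm_mul_house_pow ξ φ)

variable (K) in
theorem exists_siegel_const : ∃ c : ℝ, ∀ (ι κ : Type) [Fintype ι] [Fintype κ],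
    Fintype.card κ = 2 * Fintype.card ι → ∀ (M : Matrix ι κ (𝓞 K)), M ≠ 0 → ∀ A : ℝ,
    (∀ i j, house (M i j : K) ≤ A) → ∃ ξ : κ → 𝓞 K, ξ ≠ 0 ∧ M.mulVec ξ = 0 ∧
      ∀ j, house (ξ j : K) ≤ c * Fintype.card κ * A := by
  classical
  -- The constant of `house.exists_ne_zero_int_vec_house_le` is private.
  obtain ⟨c, hc⟩ : ∃ c : ℝ, ∀ (ι κ : Type) [Fintype ι] [Fintype κ] (p q : ℕ), 0 < p → p < q →
      Fintype.card ι = p → Fintype.card κ = q → ∀ (M : Matrix ι κ (𝓞 K)), M ≠ 0 → ∀ A : ℝ,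
      (∀ i j, house (M i j : K) ≤ A) → ∃ ξ : κ → 𝓞 K, ξ ≠ 0 ∧ M.mulVec ξ = 0 ∧
        ∀ j, house (ξ j : K) ≤ c * (c * q * A) ^ ((p : ℝ) / (q - p)) :=
    ⟨_, fun ι κ _ _ p q hp hpq hι hκ M hM A hA =>
      house.exists_ne_zero_int_vec_house_le K M hM hp hpq hκ hA hι⟩
  refine ⟨c * c, fun ι κ _ _ hcard M hM A hA => ?_⟩
  have hι : 0 < Fintype.card ι := Fintype.card_pos_iff.2 <| by
    by_contra hι
    rw [not_nonempty_iff] at hι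
    exact hM (Subsingleton.elim _ _)
  obtain ⟨ξ, hξ0, hMξ, hξ⟩ := hc ι κ _ _ hι (by omega) rfl rfl M hM A hA
  have hexp : (Fintype.card ι : ℝ) / (Fintype.card κ - Fintype.card ι) = 1 := by
    rw [hcard, Nat.cast_mul, Nat.cast_two, two_mul, add_sub_cancel_right, div_self (by positivity)]
  refine ⟨ξ, hξ0, hMξ, fun j => (hξ j).trans_eq ?_⟩
  rw [hexp, rpow_one]
  ring

end NumberField

section AuxiliaryFunction

variable {n : ℕ}

/-- The exponents `(i, j₁, j₂)` of the monomials
`z₀ ^ i * exp (j₂ * b₀ * z₀) * exp ((j₁ + j₂ * b₁) * z₁)` of Baker's auxiliary function. Their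
number `2 * n ^ 21` is twice the number of conditions `m₀ < n ^ 9`, `m₁ < n ^ 9`, `k < n ^ 3` to
which Siegel's lemma is applied. -/
abbrev Exponents (n : ℕ) := Fin (2 * n ^ 9) × Fin (n ^ 6) × Fin (n ^ 6)

/-- The factor of the partial derivative of order `(m₀, m₁)` of the monomial with exponents `v` at
`z₀ = z` which is algebraic for algebraic `b₀`, `b₁`, `z`; the other factor is an exponential. -/
def derivFactor {A : Type*} [CommRing A] (b₀ b₁ z : A) (m₀ m₁ : ℕ) (v : Exponents n) : A :=
  monomialExpDeriv z (v.2.2 * b₀) m₀ v.1 * (v.2.1 + v.2.2 * b₁) ^ m₁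

/-- The partial derivative of order `(m₀, m₁)`, at `(z, ℓ * z)`, of the combination with
coefficients `q` of the monomials `z₀ ^ i * exp (j₂ * b₀ * z₀) * exp ((j₁ + j₂ * b₁) * z₁)`. -/
noncomputable def auxFun (q : Exponents n → ℂ) (b₀ b₁ ℓ : ℂ) (m₀ m₁ : ℕ) (z : ℂ) : ℂ :=
  ∑ v, q v * (derivFactor b₀ b₁ z m₀ m₁ v *
    Complex.exp ((v.2.1 * ℓ + v.2.2 * (b₀ + b₁ * ℓ)) * z))

theorem map_derivFactor {A B : Type*} [CommRing A] [CommRing B] (f : A →+* B) (b₀ b₁ z : A)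
    (m₀ m₁ : ℕ) (v : Exponents n) :
    f (derivFactor b₀ b₁ z m₀ m₁ v) = derivFactor (f b₀) (f b₁) (f z) m₀ m₁ v := by
  simp only [derivFactor, map_mul, map_pow, map_add, map_natCast, map_monomialExpDeriv]

theorem isIntegral_pow_mul_derivFactor {A : Type*} [CommRing A] {D b₀ b₁ z : A}
    (hD : IsIntegral ℤ D) (hb₀ : IsIntegral ℤ (D * b₀)) (hb₁ : IsIntegral ℤ (D * b₁))
    (hz : IsIntegral ℤ z) (m₀ m₁ : ℕ) (v : Exponents n) :
    IsIntegral ℤ (D ^ (m₀ + m₁) * derivFactor b₀ b₁ z m₀ m₁ v) := by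
  have hsplit : D ^ (m₀ + m₁) * derivFactor b₀ b₁ z m₀ m₁ v =
      (D ^ m₀ * monomialExpDeriv z (v.2.2 * b₀) m₀ v.1) *
        (D * v.2.1 + v.2.2 * (D * b₁)) ^ m₁ := by
    rw [derivFactor, mul_left_comm _ D b₁, ← mul_add, mul_pow, pow_add]
    ring
  rw [hsplit]
  refine (isIntegral_pow_mul_monomialExpDeriv hD hz ?_ _ _).mul
    (((hD.mul (isIntegral_natCast _)).add ((isIntegral_natCast _).mul hb₁)).pow _)
  rw [mul_left_comm]
  exact (isIntegral_natCast _).mul hb₀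

theorem hasDerivAt_auxFun (q : Exponents n → ℂ) (b₀ b₁ ℓ : ℂ) (m₀ m₁ : ℕ) (z : ℂ) :
    HasDerivAt (auxFun q b₀ b₁ ℓ m₀ m₁)
      (auxFun q b₀ b₁ ℓ (m₀ + 1) m₁ z + ℓ * auxFun q b₀ b₁ ℓ m₀ (m₁ + 1) z) z := by
  unfold auxFun
  rw [Finset.mul_sum, ← Finset.sum_add_distrib]
  refine HasDerivAt.fun_sum fun v _ => ?_
  have hexp := ((hasDerivAt_id z).const_mul
    (v.2.1 * ℓ + v.2.2 * (b₀ + b₁ * ℓ) : ℂ)).cexp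
  refine ((((hasDerivAt_monomialExpDeriv (v.2.2 * b₀) m₀ v.1 z).mul_const
    ((v.2.1 + v.2.2 * b₁) ^ m₁)).mul hexp).const_mul (q v)).congr_deriv ?_
  simp only [derivFactor, monomialExpDeriv, id]
  ring

theorem differentiable_auxFun (q : Exponents n → ℂ) (b₀ b₁ ℓ : ℂ) (m₀ m₁ : ℕ) :
    Differentiable ℂ (auxFun q b₀ b₁ ℓ m₀ m₁) :=
  fun z => (hasDerivAt_auxFun q b₀ b₁ ℓ m₀ m₁ z).differentiableAt

theorem iteratedDeriv_auxFun_eq_zero {q : Exponents n → ℂ} {b₀ b₁ ℓ z : ℂ} {M : ℕ}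
    (h : ∀ i j, i + j < M → auxFun q b₀ b₁ ℓ i j z = 0) {t m₀ m₁ : ℕ} (ht : m₀ + m₁ + t < M) :
    iteratedDeriv t (auxFun q b₀ b₁ ℓ m₀ m₁) z = 0 := by
  induction t generalizing m₀ m₁ with
  | zero => simpa using h m₀ m₁ ht
  | succ t ih =>
    have hderiv : deriv (auxFun q b₀ b₁ ℓ m₀ m₁) =
        auxFun q b₀ b₁ ℓ (m₀ + 1) m₁ + fun w => ℓ * auxFun q b₀ b₁ ℓ m₀ (m₁ + 1) w :=
      funext fun w => (hasDerivAt_auxFun q b₀ b₁ ℓ m₀ m₁ w).deriv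
    have hsmooth (i j : ℕ) : ContDiffAt ℂ t (auxFun q b₀ b₁ ℓ i j) z :=
      (differentiable_auxFun q b₀ b₁ ℓ i j).contDiff.contDiffAt
    rw [iteratedDeriv_succ', hderiv,
      iteratedDeriv_add (hsmooth _ _) (contDiffAt_const.mul (hsmooth _ _)),
      iteratedDeriv_const_mul_field, ih (by omega), ih (by omega), mul_zero, add_zero]

end AuxiliaryFunction

section Estimates

theorem le_exp_self (x : ℝ) : x ≤ exp x := by
  linarith [add_one_le_exp x]

theorem pow_le_exp_mul {x a N : ℝ} (hx0 : 0 ≤ x) (ha : 0 ≤ a) (hx : x ≤ exp a) {m : ℕ}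
    (hm : m ≤ N) : x ^ m ≤ exp (N * a) := by
  calc x ^ m ≤ exp a ^ m := by gcongr
    _ = exp (m * a) := (exp_nat_mul a m).symm
    _ ≤ exp (N * a) := by gcongr

variable {n : ℕ} {X : ℝ}

theorem card_exponents (n : ℕ) : Fintype.card (Exponents n) = 2 * n ^ 21 := by
  simp only [Fintype.card_prod, Fintype.card_fin]
  ring

theorem mul_pow_le_exp {c : ℝ} (hc : 0 ≤ c) (hn : 1 ≤ n) (j : ℕ) :
    c * n ^ j ≤ exp ((c + j) * n) := by
  have hn' : (1 : ℝ) ≤ n := by exact_mod_cast hn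
  calc c * n ^ j ≤ exp c * exp (j * n) := by
        gcongr
        · exact le_exp_self c
        · exact pow_le_exp_mul (by positivity) (by positivity) (le_exp_self _) le_rfl
    _ ≤ exp ((c + j) * n) := by
        rw [← exp_add]
        gcongr
        nlinarith

theorem card_exponents_le_exp (hn : 1 ≤ n) (hX : 1 ≤ X) :
    (Fintype.card (Exponents n) : ℝ) ≤ exp (23 * X * n ^ 10) := by
  rw [card_exponents]
  push_cast
  refine (mul_pow_le_exp (by positivity) hn 21).trans ?_
  push_cast
  gcongr
  · linarith
  · exact le_self_pow₀ (by exact_mod_cast hn) (by norm_num)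

theorem mul_card_exponents_mul_exp_le (hn : 1 ≤ n) (hX : 1 ≤ X) {c : ℝ} (hc : c ≤ X) :
    c * Fintype.card (Exponents n) * exp (84 * X * n ^ 10) ≤ exp (108 * X * n ^ 10) := by
  calc c * Fintype.card (Exponents n) * exp (84 * X * n ^ 10)
      ≤ exp (X * n ^ 10) * exp (23 * X * n ^ 10) * exp (84 * X * n ^ 10) := by
        gcongr
        · calc c ≤ X * 1 := by rwa [mul_one]
            _ ≤ X * n ^ 10 := by gcongr; exact one_le_pow₀ (by exact_mod_cast hn)
            _ ≤ exp (X * n ^ 10) := le_exp_self _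
        · exact card_exponents_le_exp hn hX
    _ = exp (108 * X * n ^ 10) := by
        rw [← exp_add, ← exp_add]
        ring_nf

theorem norm_derivFactor_le_pow_mul_pow (hn : 1 ≤ n) (hX : 1 ≤ X) {b₀ b₁ z : ℂ} {R : ℝ}
    (hR : 1 ≤ R) (hb₀ : ‖b₀‖ ≤ X) (hb₁ : ‖b₁‖ ≤ X) (hz : ‖z‖ ≤ R) (m₀ m₁ : ℕ)
    (v : Exponents n) :
    ‖derivFactor b₀ b₁ z m₀ m₁ v‖ ≤ (3 * X * n ^ 9) ^ (m₀ + m₁) * R ^ (v.1 : ℕ) := by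
  have hn9 : (0 : ℝ) < n ^ 9 := by positivity
  have hi : (v.1 : ℝ) ≤ 2 * n ^ 9 := by exact_mod_cast v.1.2.le
  have hj₁ : (v.2.1 : ℝ) ≤ n ^ 9 := by
    exact_mod_cast v.2.1.2.le.trans (Nat.pow_le_pow_right hn (by norm_num))
  have hj₂ : (v.2.2 : ℝ) ≤ n ^ 9 := by
    exact_mod_cast v.2.2.2.le.trans (Nat.pow_le_pow_right hn (by norm_num))
  have hY₀ : (v.1 : ℝ) + ‖(v.2.2 * b₀ : ℂ)‖ ≤ 3 * X * n ^ 9 := by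
    rw [norm_mul, Complex.norm_natCast]
    calc (v.1 : ℝ) + v.2.2 * ‖b₀‖ ≤ 2 * n ^ 9 + n ^ 9 * X := by gcongr
      _ ≤ 3 * X * n ^ 9 := by nlinarith
  have hY₁ : ‖(v.2.1 + v.2.2 * b₁ : ℂ)‖ ≤ 3 * X * n ^ 9 := by
    refine (norm_add_le _ _).trans ?_
    rw [norm_mul, Complex.norm_natCast, Complex.norm_natCast]
    calc (v.2.1 : ℝ) + v.2.2 * ‖b₁‖ ≤ n ^ 9 + n ^ 9 * X := by gcongr
      _ ≤ 3 * X * n ^ 9 := by nlinarith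
  rw [derivFactor, norm_mul, norm_pow]
  calc ‖monomialExpDeriv z (v.2.2 * b₀) m₀ v.1‖ * ‖(v.2.1 + v.2.2 * b₁ : ℂ)‖ ^ m₁
      ≤ (3 * X * n ^ 9) ^ m₀ * R ^ (v.1 : ℕ) * (3 * X * n ^ 9) ^ m₁ := by
        gcongr
        exact norm_monomialExpDeriv_le hR hz m₀ hY₀
    _ = (3 * X * n ^ 9) ^ (m₀ + m₁) * R ^ (v.1 : ℕ) := by ring

theorem norm_derivFactor_le (hn : 1 ≤ n) (hX : 1 ≤ X) {b₀ b₁ z : ℂ} (hb₀ : ‖b₀‖ ≤ X)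
    (hb₁ : ‖b₁‖ ≤ X) (hz : ‖z‖ ≤ 5 * n ^ 22) {m₀ m₁ : ℕ} (hm : m₀ + m₁ ≤ 2 * n ^ 9)
    (v : Exponents n) : ‖derivFactor b₀ b₁ z m₀ m₁ v‖ ≤ exp (78 * X * n ^ 10) := by
  have hn' : (1 : ℝ) ≤ n := by exact_mod_cast hn
  have hm' : ((m₀ + m₁ : ℕ) : ℝ) ≤ 2 * n ^ 9 := by exact_mod_cast hm
  have hi : (v.1 : ℝ) ≤ 2 * n ^ 9 := by exact_mod_cast v.1.2.le
  have hR : (1 : ℝ) ≤ 5 * n ^ 22 := by linarith [one_le_pow₀ hn' (n := 22)]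
  calc ‖derivFactor b₀ b₁ z m₀ m₁ v‖
      ≤ (3 * X * n ^ 9) ^ (m₀ + m₁) * (5 * n ^ 22) ^ (v.1 : ℕ) :=
        norm_derivFactor_le_pow_mul_pow hn hX hR hb₀ hb₁ hz m₀ m₁ v
    _ ≤ exp (2 * n ^ 9 * ((3 * X + (9 : ℕ)) * n)) * exp (2 * n ^ 9 * ((5 + (22 : ℕ)) * n)) := by
        gcongr
        · exact pow_le_exp_mul (by positivity) (by positivity)
            (mul_pow_le_exp (by positivity) hn 9) hm'
        · exact pow_le_exp_mul (by positivity) (by positivity)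
            (mul_pow_le_exp (by positivity) hn 22) hi
    _ ≤ exp (78 * X * n ^ 10) := by
        rw [← exp_add]
        gcongr
        push_cast
        nlinarith [pow_pos (zero_lt_one.trans_le hn') 10]

theorem norm_sum_exponents_mul_le (hn : 1 ≤ n) (hX : 1 ≤ X) {q c : Exponents n → ℂ} {B : ℝ}
    (hq : ∀ v, ‖q v‖ ≤ exp (108 * X * n ^ 10)) (hc : ∀ v, ‖c v‖ ≤ B) (hB : 0 ≤ B) :
    ‖∑ v, q v * c v‖ ≤ exp (131 * X * n ^ 10) * B := by
  calc ‖∑ v, q v * c v‖ ≤ Fintype.card (Exponents n) • (exp (108 * X * n ^ 10) * B) := by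
        refine (norm_sum_le _ _).trans (Finset.sum_le_card_nsmul _ _ _ fun v _ => ?_)
        rw [norm_mul]
        gcongr
        · exact hq v
        · exact hc v
    _ ≤ exp (23 * X * n ^ 10) * (exp (108 * X * n ^ 10) * B) := by
        rw [nsmul_eq_mul]
        gcongr
        exact card_exponents_le_exp hn hX
    _ = exp (131 * X * n ^ 10) * B := by
        rw [← mul_assoc, ← exp_add]
        ring_nf

theorem norm_auxFun_le (hn : 1 ≤ n) (hX : 1 ≤ X) {b₀ b₁ ℓ z : ℂ} (hb₀ : ‖b₀‖ ≤ X)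
    (hb₁ : ‖b₁‖ ≤ X) (hℓ : ‖ℓ‖ ≤ X) (hℓ' : ‖b₀ + b₁ * ℓ‖ ≤ X) {e : ℕ} (he : 3 ≤ e)
    (he' : e ≤ 21) (hz : ‖z‖ ≤ 5 * n ^ (e + 1)) {m₀ m₁ : ℕ} (hm : m₀ + m₁ ≤ 2 * n ^ 9)
    {q : Exponents n → ℂ} (hq : ∀ v, ‖q v‖ ≤ exp (108 * X * n ^ 10)) :
    ‖auxFun q b₀ b₁ ℓ m₀ m₁ z‖ ≤ exp (219 * X * n ^ (e + 7)) := by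
  have hn' : (1 : ℝ) ≤ n := by exact_mod_cast hn
  have hz' : ‖z‖ ≤ 5 * n ^ 22 := hz.trans (by gcongr; omega)
  have hexp (v : Exponents n) :
      ‖Complex.exp ((v.2.1 * ℓ + v.2.2 * (b₀ + b₁ * ℓ)) * z)‖ ≤ exp (10 * X * n ^ (e + 7)) := by
    have hj₁ : (v.2.1 : ℝ) ≤ n ^ 6 := by exact_mod_cast v.2.1.2.le
    have hj₂ : (v.2.2 : ℝ) ≤ n ^ 6 := by exact_mod_cast v.2.2.2.le
    refine (Complex.norm_exp_le_exp_norm _).trans (exp_le_exp.2 ?_)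
    calc ‖(v.2.1 * ℓ + v.2.2 * (b₀ + b₁ * ℓ)) * z‖
        ≤ (v.2.1 * ‖ℓ‖ + v.2.2 * ‖b₀ + b₁ * ℓ‖) * ‖z‖ := by
          rw [norm_mul]
          gcongr
          refine (norm_add_le _ _).trans_eq ?_
          simp only [norm_mul, Complex.norm_natCast]
      _ ≤ (n ^ 6 * X + n ^ 6 * X) * (5 * n ^ (e + 1)) := by gcongr
      _ = 10 * X * n ^ (e + 7) := by ring
  have hterm (v : Exponents n) : ‖derivFactor b₀ b₁ z m₀ m₁ v *
      Complex.exp ((v.2.1 * ℓ + v.2.2 * (b₀ + b₁ * ℓ)) * z)‖ ≤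
        exp (78 * X * n ^ 10) * exp (10 * X * n ^ (e + 7)) := by
    rw [norm_mul]
    gcongr
    · exact norm_derivFactor_le hn hX hb₀ hb₁ hz' hm v
    · exact hexp v
  refine (norm_sum_exponents_mul_le hn hX hq hterm (by positivity)).trans ?_
  rw [← exp_add, ← exp_add]
  have hpow : (n : ℝ) ^ 10 ≤ n ^ (e + 7) := pow_le_pow_right₀ hn' (by omega)
  gcongr
  nlinarith

theorem exp_mul_half_pow_mul_exp_pow_lt_one {d : ℕ} (hd : d ≠ 0) (hn : 1 ≤ n)
    (hbig : exp (223 * X * d) < 2 ^ n) (e : ℕ) :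
    exp (4 * X * n ^ (e + 7)) * ((1 / 2) ^ (n ^ (e + 8)) * exp (219 * X * n ^ (e + 7))) *
      exp (223 * X * n ^ (e + 7)) ^ (d - 1) < 1 := by
  have hlt : exp (223 * X * d) * (1 / 2) ^ n < 1 := by
    rwa [div_pow, one_pow, mul_one_div, div_lt_one (by positivity)]
  obtain ⟨d, rfl⟩ := Nat.exists_eq_succ_of_ne_zero hd
  calc _ = exp (223 * X * n ^ (e + 7)) ^ (d + 1) * (1 / 2) ^ (n ^ (e + 8)) := by
        rw [mul_left_comm, ← exp_add, ← add_mul, ← add_mul, pow_succ]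
        norm_num
        ring
    _ = (exp (223 * X * (d + 1 : ℕ)) * (1 / 2) ^ n) ^ (n ^ (e + 7)) := by
        rw [mul_pow, ← pow_mul, ← exp_nat_mul, ← exp_nat_mul]
        push_cast
        ring_nf
    _ < 1 := pow_lt_one₀ (by positivity) hlt (by positivity)

end Estimates

section LogRelation

open NumberField

/-- A logarithm `ℓ` of an algebraic number `α₁` such that `β₀ + β₁ * ℓ`, with `β₀` and `β₁`
algebraic, is a logarithm of an algebraic number `α₂`. All algebraic numbers are taken in a field
`K` embedded into `ℂ` by `φ`. -/
structure LogRelation (K : Type*) [Field K] where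
  φ : K →+* ℂ
  ℓ : ℂ
  α₁ : K
  α₂ : K
  β₀ : K
  β₁ : K
  exp_ℓ : Complex.exp ℓ = φ α₁
  exp_affine : Complex.exp (φ β₀ + φ β₁ * ℓ) = φ α₂

namespace LogRelation

variable {K : Type*} [Field K] (S : LogRelation K) {n : ℕ}

/-- The coefficients of the linear form giving the value at `z = k` of the auxiliary function of
order `(m₀, m₁)` in terms of its coefficients. -/
def coeff (m₀ m₁ k : ℕ) (v : Exponents n) : K :=
  derivFactor S.β₀ S.β₁ (k : K) m₀ m₁ v *
    (S.α₁ ^ ((v.2.1 : ℕ) * k) * S.α₂ ^ ((v.2.2 : ℕ) * k))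

theorem auxFun_natCast (p : Exponents n → K) (m₀ m₁ k : ℕ) :
    auxFun (S.φ ∘ p) (S.φ S.β₀) (S.φ S.β₁) S.ℓ m₀ m₁ k =
      S.φ (∑ v, p v * S.coeff m₀ m₁ k v) := by
  simp only [auxFun, coeff, map_sum, map_mul, map_pow, map_natCast, map_derivFactor,
    Function.comp_apply, ← S.exp_ℓ, ← S.exp_affine, ← Complex.exp_nat_mul, ← Complex.exp_add]
  refine Finset.sum_congr rfl fun v _ => ?_
  congr 3
  push_cast
  ring

/-- The coefficients `coeff` multiplied by a power of `D` which makes them algebraic integers when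
`D` is a common denominator of the data of `S`. -/
def clearedCoeff (D : ℤ) (m₀ m₁ k : ℕ) (v : Exponents n) : K :=
  (D : K) ^ (m₀ + m₁ + 2 * n ^ 6 * k) * S.coeff m₀ m₁ k v

theorem sum_mul_clearedCoeff (D : ℤ) (p : Exponents n → K) (m₀ m₁ k : ℕ) :
    ∑ v, p v * S.clearedCoeff D m₀ m₁ k v =
      (D : K) ^ (m₀ + m₁ + 2 * n ^ 6 * k) * ∑ v, p v * S.coeff m₀ m₁ k v := by
  simp only [clearedCoeff, Finset.mul_sum, mul_left_comm]

/-- `D` is a common denominator and `X` a bound for the size of all data of `S`. -/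
structure IsBoundedBy [NumberField K] (D : ℤ) (X : ℝ) : Prop where
  denom_ne_zero : D ≠ 0
  isIntegral : ∀ a ∈ ({S.α₁, S.α₂, S.β₀, S.β₁} : Set K), IsIntegral ℤ (D * a)
  one_le : 1 ≤ X
  abs_denom_le : |(D : ℝ)| ≤ X
  norm_ℓ_le : ‖S.ℓ‖ ≤ X
  norm_affine_le : ‖S.φ S.β₀ + S.φ S.β₁ * S.ℓ‖ ≤ X
  house_le : ∀ a ∈ ({S.α₁, S.α₂, S.β₀, S.β₁} : Set K), house a ≤ X

/-- The auxiliary functions with coefficients `p` of all orders `m₀ + m₁ < M` vanish at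
`0, …, N - 1`. -/
def Vanishes (p : Exponents n → K) (M N : ℕ) : Prop :=
  ∀ ⦃m₀ m₁ k : ℕ⦄, m₀ + m₁ < M → k < N → ∑ v, p v * S.coeff m₀ m₁ k v = 0

theorem α₁_ne_zero : S.α₁ ≠ 0 := fun h =>
  Complex.exp_ne_zero S.ℓ (by rw [S.exp_ℓ, h, map_zero])

theorem α₂_ne_zero : S.α₂ ≠ 0 := fun h =>
  Complex.exp_ne_zero (S.φ S.β₀ + S.φ S.β₁ * S.ℓ) (by rw [S.exp_affine, h, map_zero])

theorem eq_zero_of_vanishes [CharZero K]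
    (hα : Function.Injective fun m : ℕ × ℕ => S.α₁ ^ m.1 * S.α₂ ^ m.2)
    (hn : 2 ≤ n) {M : ℕ} (hM : 0 < M) {p : Exponents n → K}
    (hvan : S.Vanishes p M (n ^ 22)) : p = 0 := by
  let P (j : Fin (n ^ 6) × Fin (n ^ 6)) : Polynomial K :=
    ∑ i : Fin (2 * n ^ 9), Polynomial.C (p (i, j)) * Polynomial.X ^ (i : ℕ)
  have hP : ∀ j ∈ Finset.univ, P j = 0 := by
    refine eq_zero_of_sum_eval_mul_pow_eq_zero (d := fun _ => 2 * n ^ 9)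
      (w := fun j => S.α₁ ^ (j.1 : ℕ) * S.α₂ ^ (j.2 : ℕ)) ?_ ?_ ?_ ?_
    · intro j _ j' _ h
      simpa [Prod.ext_iff, Fin.ext_iff] using hα (a₁ := (↑j.1, ↑j.2)) (a₂ := (↑j'.1, ↑j'.2)) h
    · exact fun j _ => mul_ne_zero (pow_ne_zero _ S.α₁_ne_zero) (pow_ne_zero _ S.α₂_ne_zero)
    · exact fun j _ => Polynomial.degree_sum_fin_lt (fun i => p (i, j))
    · intro k hk
      have hk' : k < n ^ 22 := by
        calc k < n ^ 6 * n ^ 6 * (2 * n ^ 9) := by simpa using hk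
          _ = 2 * n ^ 21 := by ring
          _ ≤ n * n ^ 21 := by gcongr
          _ = n ^ 22 := (pow_succ' n 21).symm
      have hzero := hvan (m₀ := 0) (m₁ := 0) hM hk'
      rw [Fintype.sum_prod_type_right] at hzero
      refine (Finset.sum_congr rfl fun j _ => ?_).trans hzero
      simp only [P, Polynomial.eval_finsetSum, Finset.sum_mul, coeff, derivFactor,
        monomialExpDeriv, Polynomial.eval_mul, Polynomial.eval_C, Polynomial.eval_pow,
        Polynomial.eval_X, pow_zero, mul_one, mul_pow, ← pow_mul, mul_assoc]
  funext ⟨i, j⟩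
  have hcoeff := congrArg (Polynomial.coeff · (i : ℕ)) (hP j (Finset.mem_univ j))
  simpa [P, Polynomial.coeff_X_pow, Fin.val_inj] using hcoeff

variable [NumberField K]

theorem exists_eventually_isBoundedBy : ∃ D, ∀ᶠ X in Filter.atTop, S.IsBoundedBy D X := by
  classical
  have : Algebra.IsAlgebraic ℤ K := (IsFractionRing.comap_isAlgebraic_iff (K := ℚ)).2 inferInstance
  obtain ⟨D, hD, h_int⟩ := Algebra.IsAlgebraic.exists_integral_multiples ℤ
    ({S.α₁, S.α₂, S.β₀, S.β₁} : Finset K)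
  refine ⟨D, ?_⟩
  filter_upwards [Filter.eventually_ge_atTop 1, Filter.eventually_ge_atTop |(D : ℝ)|,
    Filter.eventually_ge_atTop ‖S.ℓ‖, Filter.eventually_ge_atTop ‖S.φ S.β₀ + S.φ S.β₁ * S.ℓ‖,
    Filter.eventually_all_finset ({S.α₁, S.α₂, S.β₀, S.β₁} : Finset K) |>.2 fun a _ =>
      Filter.eventually_ge_atTop (house a)] with X h1 hDX hℓ hℓ' hhouse
  exact ⟨hD, fun a ha => by simpa [zsmul_eq_mul] using h_int a (by simpa using ha), h1, hDX, hℓ,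
    hℓ', fun a ha => hhouse a (by simpa using ha)⟩

namespace IsBoundedBy

variable {S} {D : ℤ} {X : ℝ}

theorem isIntegral_clearedCoeff (hS : S.IsBoundedBy D X) (m₀ m₁ k : ℕ) (v : Exponents n) :
    IsIntegral ℤ (S.clearedCoeff D m₀ m₁ k v) := by
  have hD : IsIntegral ℤ (D : K) := isIntegral_intCast D
  obtain ⟨d₁, hd₁⟩ := Nat.exists_eq_add_of_le v.2.1.2.le
  obtain ⟨d₂, hd₂⟩ := Nat.exists_eq_add_of_le v.2.2.2.le
  have hexp : m₀ + m₁ + 2 * n ^ 6 * k =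
      m₀ + m₁ + ((v.2.1 * k + d₁ * k) + (v.2.2 * k + d₂ * k)) := by
    rw [← add_mul, ← add_mul, ← hd₁, ← hd₂]
    ring
  have hsplit : S.clearedCoeff D m₀ m₁ k v =
      D ^ (m₀ + m₁) * derivFactor S.β₀ S.β₁ (k : K) m₀ m₁ v *
        ((D * S.α₁) ^ ((v.2.1 : ℕ) * k) * D ^ (d₁ * k) *
          ((D * S.α₂) ^ ((v.2.2 : ℕ) * k) * D ^ (d₂ * k))) := by
    rw [clearedCoeff, coeff, hexp]
    simp only [pow_add, mul_pow]
    ring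
  rw [hsplit]
  exact (isIntegral_pow_mul_derivFactor hD (hS.isIntegral _ (by simp)) (hS.isIntegral _ (by simp))
    (isIntegral_natCast k) m₀ m₁ v).mul
    ((((hS.isIntegral _ (by simp)).pow _).mul (hD.pow _)).mul
      (((hS.isIntegral _ (by simp)).pow _).mul (hD.pow _)))

theorem norm_le (hS : S.IsBoundedBy D X) {a : K}
    (ha : a ∈ ({S.α₁, S.α₂, S.β₀, S.β₁} : Set K)) (σ : K →+* ℂ) : ‖σ a‖ ≤ X :=
  (norm_embedding_le_house a σ).trans (hS.house_le a ha)

theorem denom_pow_le (hS : S.IsBoundedBy D X) (hn : 1 ≤ n) {e : ℕ} (he : 3 ≤ e) {m₀ m₁ k : ℕ}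
    (hm : m₀ + m₁ ≤ 2 * n ^ 9) (hk : k ≤ n ^ (e + 1)) :
    |(D : ℝ)| ^ (m₀ + m₁ + 2 * n ^ 6 * k) ≤ exp (4 * X * n ^ (e + 7)) := by
  have hexp : m₀ + m₁ + 2 * n ^ 6 * k ≤ 4 * n ^ (e + 7) := by
    calc m₀ + m₁ + 2 * n ^ 6 * k ≤ 2 * n ^ (e + 7) + 2 * n ^ 6 * n ^ (e + 1) := by
          gcongr
          refine hm.trans ?_
          gcongr
          omega
      _ = 4 * n ^ (e + 7) := by ring
  calc |(D : ℝ)| ^ (m₀ + m₁ + 2 * n ^ 6 * k) ≤ exp (4 * n ^ (e + 7) * X) :=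
        pow_le_exp_mul (abs_nonneg _) (zero_le_one.trans hS.one_le)
          (hS.abs_denom_le.trans (le_exp_self X)) (by exact_mod_cast hexp)
    _ = exp (4 * X * n ^ (e + 7)) := by ring_nf

theorem norm_map_coeff_le (hS : S.IsBoundedBy D X) (hn : 1 ≤ n) {e : ℕ} (he : 3 ≤ e)
    (he' : e ≤ 21) {m₀ m₁ k : ℕ} (hm : m₀ + m₁ ≤ 2 * n ^ 9) (hk : k ≤ n ^ (e + 1))
    (v : Exponents n) (σ : K →+* ℂ) :
    ‖σ (S.coeff m₀ m₁ k v)‖ ≤ exp (80 * X * n ^ (e + 7)) := by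
  have hn' : (1 : ℝ) ≤ n := by exact_mod_cast hn
  have hX := hS.one_le
  have hk' : ‖(k : ℂ)‖ ≤ 5 * n ^ 22 := by
    rw [Complex.norm_natCast]
    calc (k : ℝ) ≤ n ^ (e + 1) := by exact_mod_cast hk
      _ ≤ 1 * n ^ 22 := by rw [one_mul]; gcongr; omega
      _ ≤ 5 * n ^ 22 := by gcongr; norm_num
  have hpow {a : K} (ha : a ∈ ({S.α₁, S.α₂, S.β₀, S.β₁} : Set K)) (j : Fin (n ^ 6)) :
      ‖σ a‖ ^ ((j : ℕ) * k) ≤ exp (n ^ (e + 7) * X) := by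
    refine pow_le_exp_mul (norm_nonneg _) (by positivity) ((hS.norm_le ha σ).trans
      (le_exp_self X)) ?_
    have : (j : ℕ) * k ≤ n ^ 6 * n ^ (e + 1) := Nat.mul_le_mul j.2.le hk
    calc (((j : ℕ) * k : ℕ) : ℝ) ≤ n ^ 6 * n ^ (e + 1) := by exact_mod_cast this
      _ = n ^ (e + 7) := by ring
  simp only [coeff, map_mul, map_pow, map_derivFactor, map_natCast, norm_mul, norm_pow]
  calc _ ≤ exp (78 * X * n ^ 10) * (exp (n ^ (e + 7) * X) * exp (n ^ (e + 7) * X)) := by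
        gcongr
        · exact norm_derivFactor_le hn hX (hS.norm_le (by simp) σ) (hS.norm_le (by simp) σ) hk' hm v
        · exact hpow (by simp) _
        · exact hpow (by simp) _
    _ ≤ exp (80 * X * n ^ (e + 7)) := by
        rw [← exp_add, ← exp_add]
        have hpow : (n : ℝ) ^ 10 ≤ n ^ (e + 7) := pow_le_pow_right₀ hn' (by omega)
        gcongr
        nlinarith

theorem house_clearedCoeff_le (hS : S.IsBoundedBy D X) (hn : 1 ≤ n) {e : ℕ} (he : 3 ≤ e)
    (he' : e ≤ 21) {m₀ m₁ k : ℕ} (hm : m₀ + m₁ ≤ 2 * n ^ 9) (hk : k ≤ n ^ (e + 1))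
    (v : Exponents n) :
    house (S.clearedCoeff D m₀ m₁ k v) ≤ exp (84 * X * n ^ (e + 7)) := by
  refine (house_le_iff (by positivity)).2 fun σ => ?_
  rw [clearedCoeff, map_mul, norm_mul, map_pow, norm_pow, map_intCast, Complex.norm_intCast]
  calc _ ≤ exp (4 * X * n ^ (e + 7)) * exp (80 * X * n ^ (e + 7)) := by
        gcongr
        · exact hS.denom_pow_le hn he hm hk
        · exact hS.norm_map_coeff_le hn he he' hm hk v σ
    _ = exp (84 * X * n ^ (e + 7)) := by
        rw [← exp_add]
        ring_nf

theorem norm_auxFun_le_of_vanishes (hS : S.IsBoundedBy D X) (hn : 1 ≤ n) {e : ℕ} (he : 3 ≤ e)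
    (he' : e ≤ 21) {M : ℕ} (hM : M + n ^ 8 ≤ n ^ 9) {p : Exponents n → K}
    (hp : ∀ v, house (p v) ≤ exp (108 * X * n ^ 10)) (hvan : S.Vanishes p (M + n ^ 8) (n ^ e))
    {m₀ m₁ : ℕ} (hm : m₀ + m₁ < M) {z : ℂ} (hz : ‖z‖ ≤ n ^ (e + 1)) :
    ‖auxFun (S.φ ∘ p) (S.φ S.β₀) (S.φ S.β₁) S.ℓ m₀ m₁ z‖ ≤
      (1 / 2) ^ (n ^ (e + 8)) * exp (219 * X * n ^ (e + 7)) := by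
  have hr : (0 : ℝ) < n ^ (e + 1) := by positivity
  have hdiff := differentiable_auxFun (S.φ ∘ p) (S.φ S.β₀) (S.φ S.β₁) S.ℓ m₀ m₁
  have hzeros : ∀ a ∈ (Finset.range (n ^ e)).map Nat.castEmbedding, ((n ^ 8 : ℕ) : ℕ∞) ≤
      analyticOrderAt (auxFun (S.φ ∘ p) (S.φ S.β₀) (S.φ S.β₁) S.ℓ m₀ m₁) a := by
    simp only [Finset.forall_mem_map, Finset.mem_range, Nat.castEmbedding_apply]
    intro k hk
    rw [natCast_le_analyticOrderAt_iff_iteratedDeriv_eq_zero (hdiff.analyticAt _)]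
    refine fun t ht => iteratedDeriv_auxFun_eq_zero (fun i j hij => ?_) (Nat.add_lt_add hm ht)
    rw [auxFun_natCast, hvan hij hk, map_zero]
  have hzeros_norm : ∀ a ∈ (Finset.range (n ^ e)).map Nat.castEmbedding,
      ‖(a : ℂ)‖ ≤ n ^ (e + 1) := by
    simp only [Finset.forall_mem_map, Finset.mem_range, Nat.castEmbedding_apply,
      Complex.norm_natCast]
    intro k hk
    exact_mod_cast hk.le.trans (Nat.pow_le_pow_right hn e.le_succ)
  have hschwarz := norm_le_of_le_analyticOrderAt hdiff hzeros hr.le (R := 5 * n ^ (e + 1))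
    (by linarith) hzeros_norm (fun w hw => norm_auxFun_le hn hS.one_le (hS.norm_le (by simp) S.φ)
      (hS.norm_le (by simp) S.φ) hS.norm_ℓ_le hS.norm_affine_le he he' hw (by omega)
      fun v => (norm_embedding_le_house _ _).trans (hp v)) hz
  have hratio : 2 * (n : ℝ) ^ (e + 1) / (5 * n ^ (e + 1) - n ^ (e + 1)) = 1 / 2 := by
    field_simp
    norm_num
  rwa [hratio, Finset.card_map, Finset.card_range, ← pow_add, add_comm 8 e] at hschwarz

theorem house_sum_mul_clearedCoeff_le (hS : S.IsBoundedBy D X) (hn : 1 ≤ n) {e : ℕ} (he : 3 ≤ e)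
    (he' : e ≤ 21) {p : Exponents n → K} (hp : ∀ v, house (p v) ≤ exp (108 * X * n ^ 10))
    {m₀ m₁ k : ℕ} (hm : m₀ + m₁ ≤ 2 * n ^ 9) (hk : k ≤ n ^ (e + 1)) :
    house (∑ v, p v * S.clearedCoeff D m₀ m₁ k v) ≤ exp (223 * X * n ^ (e + 7)) := by
  refine (house_le_iff (by positivity)).2 fun σ => ?_
  simp only [map_sum, map_mul]
  calc ‖∑ v, σ (p v) * σ (S.clearedCoeff D m₀ m₁ k v)‖
      ≤ exp (131 * X * n ^ 10) * exp (84 * X * n ^ (e + 7)) :=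
        norm_sum_exponents_mul_le hn hS.one_le
          (fun v => (norm_embedding_le_house _ σ).trans (hp v))
          (fun v => (norm_embedding_le_house _ σ).trans
            (hS.house_clearedCoeff_le hn he he' hm hk v)) (by positivity)
    _ ≤ exp (223 * X * n ^ (e + 7)) := by
        have hX := hS.one_le
        have hpow : (n : ℝ) ^ 10 ≤ n ^ (e + 7) :=
          pow_le_pow_right₀ (by exact_mod_cast hn) (by omega)
        rw [← exp_add]
        gcongr
        nlinarith [pow_pos (show (0 : ℝ) < n by positivity) (e + 7)]

theorem vanishes_succ (hS : S.IsBoundedBy D X) (hn : 1 ≤ n)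
    (hbig : exp (223 * X * Module.finrank ℚ K) < 2 ^ n) {e : ℕ} (he : 3 ≤ e) (he' : e ≤ 21) {M : ℕ}
    (hM : M + n ^ 8 ≤ n ^ 9) {p : Exponents n → K} (h_int : ∀ v, IsIntegral ℤ (p v))
    (hp : ∀ v, house (p v) ≤ exp (108 * X * n ^ 10)) (hvan : S.Vanishes p (M + n ^ 8) (n ^ e)) :
    S.Vanishes p M (n ^ (e + 1)) := by
  intro m₀ m₁ k hm hk
  by_contra hne
  obtain ⟨ξ, hξ⟩ : ∃ ξ, ξ = ∑ v, p v * S.clearedCoeff D m₀ m₁ k v := ⟨_, rfl⟩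
  have hξ0 : ξ ≠ 0 := by
    rw [hξ, sum_mul_clearedCoeff]
    exact mul_ne_zero (pow_ne_zero _ (Int.cast_ne_zero.2 hS.denom_ne_zero)) hne
  have hξ_int : IsIntegral ℤ ξ :=
    hξ ▸ IsIntegral.sum _ fun v _ => (h_int v).mul (hS.isIntegral_clearedCoeff m₀ m₁ k v)
  have hξ_house : house ξ ≤ exp (223 * X * n ^ (e + 7)) :=
    hξ ▸ hS.house_sum_mul_clearedCoeff_le hn he he' hp (by omega) hk.le
  have hξ_norm : ‖S.φ ξ‖ ≤ exp (4 * X * n ^ (e + 7)) *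
      ((1 / 2) ^ (n ^ (e + 8)) * exp (219 * X * n ^ (e + 7))) := by
    rw [hξ, sum_mul_clearedCoeff, map_mul, norm_mul, ← auxFun_natCast, map_pow, norm_pow,
      map_intCast, Complex.norm_intCast]
    gcongr
    · exact hS.denom_pow_le hn he (by omega) hk.le
    · refine hS.norm_auxFun_le_of_vanishes hn he he' hM hp hvan hm ?_
      rw [Complex.norm_natCast]
      exact_mod_cast hk.le
  refine (exp_mul_half_pow_mul_exp_pow_lt_one Module.finrank_pos.ne' hn hbig e).not_ge ?_
  calc 1 ≤ ‖S.φ ξ‖ * house ξ ^ (Module.finrank ℚ K - 1) := one_le_norm_mul_house_pow hξ_int hξ0 _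
    _ ≤ _ := by
        have := house_nonneg ξ
        gcongr

theorem vanishes_iterate (hS : S.IsBoundedBy D X)
    (hbig : exp (223 * X * Module.finrank ℚ K) < 2 ^ n) {p : Exponents n → K}
    (h_int : ∀ v, IsIntegral ℤ (p v)) (hp : ∀ v, house (p v) ≤ exp (108 * X * n ^ 10))
    (hvan : S.Vanishes p (n ^ 9) (n ^ 3)) {J : ℕ} (hJ : J ≤ 19) (hJn : J < n) :
    S.Vanishes p ((n - J) * n ^ 8) (n ^ (3 + J)) := by
  induction J with
  | zero => simpa [← pow_succ'] using hvan
  | succ J ih =>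
    have hsucc : (n - (J + 1)) * n ^ 8 + n ^ 8 = (n - J) * n ^ 8 := by
      rw [← Nat.succ_mul]
      congr 1
      omega
    refine hS.vanishes_succ (e := 3 + J) (by omega) hbig (by omega) (by omega) ?_ h_int hp ?_
    · calc _ = (n - J) * n ^ 8 := hsucc
        _ ≤ n * n ^ 8 := by gcongr; omega
        _ = n ^ 9 := (pow_succ' n 8).symm
    · rw [hsucc]
      exact ih (by omega) (by omega)

end IsBoundedBy

theorem exists_siegel_solution (D : ℤ) :
    ∀ᶠ X in Filter.atTop, S.IsBoundedBy D X → ∀ n ≥ 1, ∃ p : Exponents n → K, p ≠ 0 ∧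
      (∀ v, IsIntegral ℤ (p v)) ∧ (∀ v, house (p v) ≤ exp (108 * X * n ^ 10)) ∧
      S.Vanishes p (n ^ 9) (n ^ 3) := by
  obtain ⟨c, hc⟩ := exists_siegel_const K
  filter_upwards [Filter.eventually_ge_atTop c] with X hcX hS n hn
  let M : Matrix (Fin (n ^ 9) × Fin (n ^ 9) × Fin (n ^ 3)) (Exponents n) (𝓞 K) := fun i v =>
    ⟨S.clearedCoeff D i.1 i.2.1 i.2.2 v, hS.isIntegral_clearedCoeff _ _ _ v⟩
  have hM0 : M ≠ 0 := by
    have h9 : 0 < n ^ 9 := by positivity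
    have h6 : 0 < n ^ 6 := by positivity
    intro h
    have hentry : S.clearedCoeff D 0 0 0 (⟨0, by positivity⟩, ⟨0, h6⟩, ⟨0, h6⟩) = 0 :=
      congrArg (fun a : 𝓞 K => (a : K)) (congrFun₂ h (⟨0, h9⟩, ⟨0, h9⟩, ⟨0, by positivity⟩) _)
    simp [clearedCoeff, coeff, derivFactor, monomialExpDeriv] at hentry
  have hM (i v) : house (M i v : K) ≤ exp (84 * X * n ^ 10) :=
    hS.house_clearedCoeff_le hn le_rfl (by norm_num) (by omega)
      (i.2.2.2.le.trans (Nat.pow_le_pow_right hn (by norm_num))) v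
  have hcard : Fintype.card (Exponents n) =
      2 * Fintype.card (Fin (n ^ 9) × Fin (n ^ 9) × Fin (n ^ 3)) := by
    simp only [Fintype.card_prod, Fintype.card_fin]
    ring
  obtain ⟨ξ, hξ0, hMξ, hξ⟩ := hc _ _ hcard M hM0 _ hM
  refine ⟨fun v => ξ v, fun h => hξ0 ?_, fun v => (ξ v).2, fun v => (hξ v).trans ?_, ?_⟩
  · exact funext fun v => RingOfIntegers.ext (congrFun h v)
  · exact mul_card_exponents_mul_exp_le hn hS.one_le hcX
  · intro m₀ m₁ k hm hk
    have hrow := congrArg (algebraMap (𝓞 K) K)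
      (congrFun hMξ (⟨m₀, by omega⟩, ⟨m₁, by omega⟩, ⟨k, hk⟩))
    simp only [Matrix.mulVec, dotProduct, map_sum, map_mul, Pi.zero_apply, map_zero] at hrow
    have hcleared : ∑ v, (ξ v : K) * S.clearedCoeff D m₀ m₁ k v = 0 :=
      (Finset.sum_congr rfl fun v _ => mul_comm _ _).trans hrow
    rw [sum_mul_clearedCoeff] at hcleared
    exact (mul_eq_zero_iff_left
      (pow_ne_zero _ (Int.cast_ne_zero.2 hS.denom_ne_zero))).1 hcleared

theorem not_injective_pow_mul_pow :
    ¬ Function.Injective fun m : ℕ × ℕ => S.α₁ ^ m.1 * S.α₂ ^ m.2 := by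
  intro hα
  obtain ⟨D, hD⟩ := S.exists_eventually_isBoundedBy
  obtain ⟨X, hX, hsiegel⟩ := (hD.and (S.exists_siegel_solution D)).exists
  obtain ⟨n, hn, hbig⟩ := ((Filter.eventually_ge_atTop 20).and
    ((tendsto_pow_atTop_atTop_of_one_lt one_lt_two).eventually_gt_atTop
      (exp (223 * X * Module.finrank ℚ K)))).exists
  obtain ⟨p, hp0, h_int, hp, hvan⟩ := hsiegel hX n (by omega)
  refine hp0 (S.eq_zero_of_vanishes hα (M := (n - 19) * n ^ 8) (by omega) ?_
    (hX.vanishes_iterate hbig h_int hp hvan (J := 19) le_rfl (by omega)))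
  exact Nat.mul_pos (by omega) (by positivity)

end LogRelation

end LogRelation

section LinearForms

theorem not_injective_exp_pow_mul_exp_pow {ℓ b₀ b₁ : ℂ} (hb₀ : IsAlgebraic ℚ b₀)
    (hb₁ : IsAlgebraic ℚ b₁) (hℓ : IsAlgebraic ℚ (Complex.exp ℓ))
    (hℓ' : IsAlgebraic ℚ (Complex.exp (b₀ + b₁ * ℓ))) :
    ¬ Function.Injective fun m : ℕ × ℕ =>
      Complex.exp ℓ ^ m.1 * Complex.exp (b₀ + b₁ * ℓ) ^ m.2 := by
  let s : Set ℂ := {b₀, b₁, Complex.exp ℓ, Complex.exp (b₀ + b₁ * ℓ)}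
  let K := IntermediateField.adjoin ℚ s
  have hfin : FiniteDimensional ℚ K := by
    refine IntermediateField.finiteDimensional_adjoin ?_
    rintro x (rfl | rfl | rfl | rfl)
    exacts [hb₀.isIntegral, hb₁.isIntegral, hℓ.isIntegral, hℓ'.isIntegral]
  have : NumberField K := ⟨⟩
  have hs {x : ℂ} (hx : x ∈ s) : x ∈ K := IntermediateField.subset_adjoin ℚ s hx
  let S : LogRelation K :=
    { φ := K.val
      ℓ := ℓ
      α₁ := ⟨Complex.exp ℓ, hs (by simp [s])⟩
      α₂ := ⟨Complex.exp (b₀ + b₁ * ℓ), hs (by simp [s])⟩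
      β₀ := ⟨b₀, hs (by simp [s])⟩
      β₁ := ⟨b₁, hs (by simp [s])⟩
      exp_ℓ := rfl
      exp_affine := rfl }
  exact fun h => S.not_injective_pow_mul_pow fun m m' hm => h (congrArg K.val hm)

theorem transcendental_add_mul_add_mul {ℓ₁ ℓ₂ γ β₁ β₂ : ℂ}
    (hℓ₁ : IsAlgebraic ℚ (Complex.exp ℓ₁)) (hℓ₂ : IsAlgebraic ℚ (Complex.exp ℓ₂))
    (hinj : Function.Injective fun m : ℕ × ℕ => Complex.exp ℓ₁ ^ m.1 * Complex.exp ℓ₂ ^ m.2)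
    (hγ : IsAlgebraic ℚ γ) (hβ₁ : IsAlgebraic ℚ β₁) (hβ₂ : IsAlgebraic ℚ β₂)
    (hβ : β₁ ≠ 0 ∨ β₂ ≠ 0) : Transcendental ℚ (γ + β₁ * ℓ₁ + β₂ * ℓ₂) := by
  intro hx
  by_cases h₂ : β₂ = 0
  · have h₁ : β₁ ≠ 0 := hβ.resolve_right (not_not.2 h₂)
    have hsolve : ℓ₁ = (γ + β₁ * ℓ₁ + β₂ * ℓ₂ - γ) * β₁⁻¹ + 0 * ℓ₂ := by
      rw [h₂]
      field_simp
      ring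
    refine not_injective_exp_pow_mul_exp_pow ((hx.sub hγ).mul hβ₁.inv) isAlgebraic_zero hℓ₂
      (hsolve ▸ hℓ₁) ?_
    rw [← hsolve]
    convert hinj.comp Prod.swap_injective using 2
    exact mul_comm _ _
  · have hsolve : ℓ₂ = (γ + β₁ * ℓ₁ + β₂ * ℓ₂ - γ) * β₂⁻¹ + -β₁ * β₂⁻¹ * ℓ₁ := by
      field_simp
      ring
    refine not_injective_exp_pow_mul_exp_pow ((hx.sub hγ).mul hβ₂.inv) (hβ₁.neg.mul hβ₂.inv) hℓ₁
      (hsolve ▸ hℓ₂) ?_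
    rwa [← hsolve]

end LinearForms

section Circle

theorem injective_pow_mul_circle_pow {r : ℂ} (hr0 : r ≠ 0) (hr1 : ‖r‖ ≠ 1) {w : Circle}
    (hw : ¬ IsOfFinOrder w) : Function.Injective fun m : ℕ × ℕ => r ^ m.1 * (w : ℂ) ^ m.2 := by
  rintro ⟨i, j⟩ ⟨i', j'⟩ h
  obtain rfl : i = i' := by
    refine pow_right_injective₀ (norm_pos_iff.2 hr0) hr1 ?_
    simpa only [norm_mul, norm_pow, Circle.norm_coe, one_pow, mul_one] using congrArg norm h
  have hpow : w ^ j = w ^ j' := by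
    ext
    simpa using mul_left_cancel₀ (pow_ne_zero i hr0) h
  rw [injective_pow_iff_not_isOfFinOrder.2 hw hpow]

theorem isConjRoot_neg_of_sq_eq {F L : Type*} [Field F] [CommRing L] [IsDomain L] [Algebra F L]
    {x : L} {q : F} (hx : x ^ 2 = algebraMap F L q) (hq : ¬ IsSquare q) : IsConjRoot F x (-x) := by
  have hirr : Irreducible (Polynomial.X ^ 2 - Polynomial.C q) :=
    X_pow_sub_C_irreducible_of_prime Nat.prime_two fun b hb => hq ⟨b, by rw [← hb, sq]⟩
  have hmonic := Polynomial.monic_X_pow_sub_C q two_ne_zero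
  exact (minpoly.eq_of_irreducible_of_monic hirr (by simp [hx]) hmonic).symm.trans
    (minpoly.eq_of_irreducible_of_monic hirr (by simp [hx]) hmonic)

theorem not_isOfFinOrder_circle_exp {θ y : ℝ} (hconj : IsConjRoot ℚ (cos θ) y) (hy : 1 < |y|) :
    ¬ IsOfFinOrder (Circle.exp θ) := by
  rw [isOfFinOrder_iff_pow_eq_one]
  rintro ⟨n, hn, hpow⟩
  obtain ⟨m, hm⟩ := Circle.exp_eq_one.1 ((Circle.exp_nsmul θ n).trans hpow)
  have hcos : cos ((n : ℤ) * θ) = 1 := by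
    rw [← cos_int_mul_two_pi m, ← hm]
    simp only [nsmul_eq_mul, Int.cast_natCast]
  have hdvd : minpoly ℚ (cos θ) ∣ Polynomial.Chebyshev.T ℚ n - 1 := by
    refine minpoly.dvd ℚ _ ?_
    rw [map_sub, map_one, Polynomial.Chebyshev.aeval_T, Polynomial.Chebyshev.T_real_cos, hcos,
      sub_self]
  have hy1 : (Polynomial.Chebyshev.T ℝ n).eval y = 1 := by
    simpa [sub_eq_zero] using Polynomial.aeval_eq_zero_of_dvd_aeval_eq_zero hdvd hconj.aeval_eq_zero
  have hlt := Polynomial.Chebyshev.one_lt_abs_eval_T_real (n := n) (by omega) hy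
  rw [hy1, abs_one] at hlt
  exact hlt.false

end Circle

section RealLinearForms

theorem sqrt_mem_algebraicClosure {x : ℝ} (hx : x ∈ algebraicClosure ℚ ℝ) :
    √x ∈ algebraicClosure ℚ ℝ := by
  obtain h | h := le_total 0 x
  · refine mem_algebraicClosure_iff.2 (.of_pow two_pos ?_)
    rwa [sq_sqrt h, ← mem_algebraicClosure_iff]
  · rw [sqrt_eq_zero_of_nonpos h]
    exact zero_mem _

theorem isAlgebraic_ofReal_iff {x : ℝ} : IsAlgebraic ℚ (x : ℂ) ↔ IsAlgebraic ℚ x :=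
  isAlgebraic_algebraMap_iff (R := ℚ) (S := ℝ) (A := ℂ) Complex.ofReal_injective

theorem isAlgebraic_circle_exp {θ : ℝ} (h : IsAlgebraic ℚ (cos θ)) :
    IsAlgebraic ℚ (Circle.exp θ : ℂ) := by
  have hsin : IsAlgebraic ℚ (sin θ) := by
    refine IsAlgebraic.of_pow two_pos ?_
    rw [sin_sq]
    exact isAlgebraic_one.sub (h.pow 2)
  rw [Circle.coe_exp, Complex.exp_mul_I, ← Complex.ofReal_cos, ← Complex.ofReal_sin]
  exact (isAlgebraic_ofReal_iff.2 h).add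
    ((isAlgebraic_ofReal_iff.2 hsin).mul Complex.isIntegral_rat_I.isAlgebraic)

theorem transcendental_add_mul_log_add_mul {r θ γ c d : ℝ} (hr : IsAlgebraic ℚ r) (hr0 : 0 < r)
    (hr1 : r ≠ 1) (hθ : IsAlgebraic ℚ (cos θ)) (hord : ¬ IsOfFinOrder (Circle.exp θ))
    (hγ : IsAlgebraic ℚ γ) (hc : IsAlgebraic ℚ c) (hd : IsAlgebraic ℚ d) (hcd : c ≠ 0 ∨ d ≠ 0) :
    Transcendental ℚ (γ + c * log r + d * θ) := by
  have hexp_log : Complex.exp (log r) = r := by rw [← Complex.ofReal_exp, exp_log hr0]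
  have hinj : Function.Injective fun m : ℕ × ℕ =>
      Complex.exp (log r) ^ m.1 * Complex.exp (θ * Complex.I) ^ m.2 := by
    refine injective_pow_mul_circle_pow (w := Circle.exp θ) (Complex.exp_ne_zero _) ?_ hord
    rwa [hexp_log, Complex.norm_of_nonneg hr0.le]
  have htrans := transcendental_add_mul_add_mul
    (by rw [hexp_log]; exact isAlgebraic_ofReal_iff.2 hr) (isAlgebraic_circle_exp hθ) hinj
    (isAlgebraic_ofReal_iff.2 hγ) (isAlgebraic_ofReal_iff.2 hc)
    ((isAlgebraic_ofReal_iff.2 hd).mul Complex.isIntegral_rat_I.isAlgebraic.neg)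
    (by simpa using hcd)
  have hcast : ((γ + c * log r + d * θ : ℝ) : ℂ) =
      γ + c * log r + d * -Complex.I * (θ * Complex.I) := by
    push_cast
    linear_combination (d * θ : ℂ) * Complex.I_sq
  rwa [← hcast, Transcendental, isAlgebraic_ofReal_iff] at htrans

theorem isConjRoot_sqrt_five_div_two_sub_one : IsConjRoot ℚ (√5 / 2 - 1) (-(√5 / 2) - 1) := by
  have hsq : (√5 / 2) ^ 2 = algebraMap ℚ ℝ (5 / 4) := by
    rw [div_pow, sq_sqrt (by norm_num)]
    norm_num
  have hq : ¬ IsSquare (5 / 4 : ℚ) := by norm_num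
  simpa using (isConjRoot_neg_of_sq_eq hsq hq).sub_algebraMap 1

theorem sqrt_five_mem_Ioo : √5 ∈ Set.Ioo 2 3 := by
  constructor <;> norm_num [lt_sqrt, sqrt_lt']

theorem one_add_sqrt_five_div_two_sub_mem_Ioo :
    1 + √5 / 2 - √(4 * √5 + 5) / 2 ∈ Set.Ioo 0 1 := by
  obtain ⟨h2, h3⟩ := sqrt_five_mem_Ioo
  have h5 : √5 ^ 2 = 5 := sq_sqrt (by norm_num)
  have hlt : √(4 * √5 + 5) < √5 + 2 := (sqrt_lt' (by linarith)).2 (by nlinarith)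
  have hgt : √5 < √(4 * √5 + 5) := sqrt_lt_sqrt (by norm_num) (by linarith)
  constructor <;> linarith

theorem sqrt_five_mem_algebraicClosure : √5 ∈ algebraicClosure ℚ ℝ :=
  sqrt_mem_algebraicClosure (ofNat_mem _ 5)

theorem isAlgebraic_one_add_sqrt_five_div_two_sub :
    IsAlgebraic ℚ (1 + √5 / 2 - √(4 * √5 + 5) / 2) := by
  let A := algebraicClosure ℚ ℝ
  have h5 : √5 ∈ A := sqrt_five_mem_algebraicClosure
  have hsqrt : √(4 * √5 + 5) ∈ A :=
    sqrt_mem_algebraicClosure (add_mem (mul_mem (ofNat_mem A 4) h5) (ofNat_mem A 5))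
  exact mem_algebraicClosure_iff.1 (sub_mem (add_mem (one_mem A) (div_mem h5 (ofNat_mem A 2)))
    (div_mem hsqrt (ofNat_mem A 2)))

theorem cos_arccos_sqrt_five : cos (arccos (√5 / 2 - 1)) = √5 / 2 - 1 :=
  cos_arccos (by linarith [sqrt_five_mem_Ioo.1]) (by linarith [sqrt_five_mem_Ioo.2])

theorem isAlgebraic_cos_arccos_sqrt_five : IsAlgebraic ℚ (cos (arccos (√5 / 2 - 1))) := by
  let A := algebraicClosure ℚ ℝ
  rw [cos_arccos_sqrt_five]
  exact mem_algebraicClosure_iff.1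
    (sub_mem (div_mem sqrt_five_mem_algebraicClosure (ofNat_mem A 2)) (one_mem A))

theorem not_isOfFinOrder_circle_exp_arccos_sqrt_five :
    ¬ IsOfFinOrder (Circle.exp (arccos (√5 / 2 - 1))) := by
  refine not_isOfFinOrder_circle_exp (y := -(√5 / 2) - 1) ?_ ?_
  · rw [cos_arccos_sqrt_five]
    exact isConjRoot_sqrt_five_div_two_sub_one
  · rw [lt_abs]
    right
    linarith [sqrt_five_mem_Ioo.1]

end RealLinearForms

/-- **Transcendence of the error sum for `(log ρ)/√5`.**
The number
`(√(124√5−265) log(1 + √5/2 − √(4√5+5)/2) − √(124√5+265) arccos(√5/2 − 1))/(55√11) + 1/11`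
is transcendental over `ℚ`. -/
theorem transcendental_error_sum_log_golden_ratio :
    Transcendental ℚ
      ((Real.sqrt (124 * Real.sqrt 5 - 265) *
            Real.log (1 + Real.sqrt 5 / 2 - Real.sqrt (4 * Real.sqrt 5 + 5) / 2)
          - Real.sqrt (124 * Real.sqrt 5 + 265) * Real.arccos (Real.sqrt 5 / 2 - 1)) /
          (55 * Real.sqrt 11)
        + 1 / 11) := by
  let A := algebraicClosure ℚ ℝ
  have h5 : √5 ∈ A := sqrt_five_mem_algebraicClosure
  have hg : 55 * √11 ∈ A := mul_mem (ofNat_mem A 55) (sqrt_mem_algebraicClosure (ofNat_mem A 11))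
  have hc : √(124 * √5 - 265) / (55 * √11) ∈ A := div_mem
    (sqrt_mem_algebraicClosure (sub_mem (mul_mem (ofNat_mem A 124) h5) (ofNat_mem A 265))) hg
  have hd : -(√(124 * √5 + 265) / (55 * √11)) ∈ A := neg_mem (div_mem
    (sqrt_mem_algebraicClosure (add_mem (mul_mem (ofNat_mem A 124) h5) (ofNat_mem A 265))) hg)
  have hd0 : -(√(124 * √5 + 265) / (55 * √11)) ≠ 0 := neg_ne_zero.2 (by positivity)
  obtain ⟨hr0, hr1⟩ := one_add_sqrt_five_div_two_sub_mem_Ioo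
  have h11 : 1 / 11 ∈ A := div_mem (one_mem A) (ofNat_mem A 11)
  simp only [A, mem_algebraicClosure_iff] at hc hd h11
  convert transcendental_add_mul_log_add_mul isAlgebraic_one_add_sqrt_five_div_two_sub hr0 hr1.ne
    isAlgebraic_cos_arccos_sqrt_five not_isOfFinOrder_circle_exp_arccos_sqrt_five h11 hc hd
    (.inr hd0) using 1
  ring
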